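/- Let λ : [t₀,∞) → (0,∞) be differentiable and let x : [t₀,∞) → H be differentiable. Then the map t ↦ Φ_{λ(t)}(x(t)) is differentiable on [t₀,∞) and for every t ≥ t₀ its derivative equals ⟨∇Φ_{λ(t)}(x(t)), ẋ(t)⟩ − (λ'(t)/2)·‖∇Φ_{λ(t)}(x(t))‖². -/

import Mathlib

open Set MeasureTheory Filter Real

noncomputable section

/-- Convexity for extended-real-valued functions. -/
def EConvexOn {H : Type*} [NormedAddCommGroup H] [NormedSpace ℝ H] (f : H → EReal) : Prop :=
  ∀ x y : H, ∀ a c : ℝ, 0 ≤ a → 0 ≤ c → a + c = 1 →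
    f (a • x + c • y) ≤ (a : EReal) * f x + (c : EReal) * f y

/-- `p` is the proximal point of `f` with parameter `l` at `x`, i.e. the (unique) minimizer of
`y ↦ f y + ‖x - y‖² / (2l)`. -/
def IsProxPt {H : Type*} [NormedAddCommGroup H] [InnerProductSpace ℝ H]
    (f : H → EReal) (l : ℝ) (x p : H) : Prop :=
  ∀ y : H, f p + ((‖x - p‖ ^ 2 / (2 * l) : ℝ) : EReal)
      ≤ f y + ((‖x - y‖ ^ 2 / (2 * l) : ℝ) : EReal)

/-- The Moreau envelope of `f` with parameter `l` (as a real number). -/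
def moreau {H : Type*} [NormedAddCommGroup H] [InnerProductSpace ℝ H]
    (f : H → EReal) (l : ℝ) (x : H) : ℝ :=
  (⨅ y : H, f y + ((‖x - y‖ ^ 2 / (2 * l) : ℝ) : EReal)).toReal

/-!
On `m > 0` the function `P (m, w) = ‖w‖² / (2m)` lies above each linear functional
`L (m, w) = ⟪g, w⟫ - m / 2 * ‖g‖²` (complete the square), with equality where `w = m • g`.
At a proximal point `p` of `x` with parameter `l`, the vector `g = l⁻¹ • (x - p)` is a subgradient
of `Φ`: compare `p` with a point of the segment from `p` to `y`, and let that point tend to `p`.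
Hence `moreau Φ m z - Φ p` lies between `L (m, z - p)` and `P (m, z - p)`. These bounds agree at
`(m, z) = (l, x)`, and a function squeezed between an affine and a differentiable function touching
each other is differentiable with the slope of the affine one. So the envelope has joint Fréchet
derivative `L` at `(l, x)`, and the chain rule applies.
-/

open Topology Asymptotics

section Limits

theorem le_of_forall_mem_Ioo_le_add_mul {b c d : ℝ}
    (h : ∀ θ ∈ Ioo (0 : ℝ) 1, b ≤ c + θ * d) : b ≤ c := by
  have hlim : Tendsto (fun θ : ℝ => c + θ * d) (𝓝[>] 0) (𝓝 c) := by
    have hcont : Continuous fun θ : ℝ => c + θ * d := by fun_prop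
    simpa using (hcont.tendsto 0).mono_left nhdsWithin_le_nhds
  exact ge_of_tendsto hlim (eventually_of_mem (Ioo_mem_nhdsGT one_pos) h)

theorem hasFDerivAt_of_le_of_le {E : Type*} [NormedAddCommGroup E] [NormedSpace ℝ E]
    {f g h : E → ℝ} {f' : E →L[ℝ] ℝ} {x : E} (hf : HasFDerivAt f f' x)
    (hh : DifferentiableAt ℝ h x) (hfg : ∀ᶠ y in 𝓝 x, f y ≤ g y)
    (hgh : ∀ᶠ y in 𝓝 x, g y ≤ h y) (hfh : f x = h x) : HasFDerivAt g f' x := by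
  have hfgx : f x = g x := le_antisymm hfg.self_of_nhds (hfh ▸ hgh.self_of_nhds)
  have hmin : IsLocalMin (fun y => h y - f y) x := by
    filter_upwards [hfg, hgh] with y hfy hgy
    linarith
  have hgap : HasFDerivAt (fun y => h y - f y) (0 : E →L[ℝ] ℝ) x := by
    have hsub := hh.hasFDerivAt.fun_sub hf
    rwa [hmin.hasFDerivAt_eq_zero hsub] at hsub
  have hdiff : HasFDerivAt (fun y => g y - f y) (0 : E →L[ℝ] ℝ) x := by
    rw [hasFDerivAt_iff_isLittleO] at hgap ⊢
    refine IsBigO.trans_isLittleO (IsBigO.of_norm_eventuallyLE ?_) hgap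
    filter_upwards [hfg, hgh] with y hfy hgy
    simp only [zero_apply, sub_zero, hfh, sub_self, ← hfgx, Real.norm_eq_abs]
    rw [abs_of_nonneg (by linarith)]
    linarith
  simpa using hdiff.fun_add hf

end Limits

section MoreauEnvelope

variable {H : Type*} [NormedAddCommGroup H] [InnerProductSpace ℝ H]

section Perspective

/-- The perspective of the half squared norm, i.e. the penalty `(m, w) ↦ ‖w‖² / (2m)` of the Moreau
envelope as a joint function of the parameter and the displacement; meaningful for `0 < m`. -/
def sqPerspective (q : ℝ × H) : ℝ :=
  ‖q.2‖ ^ 2 / (2 * q.1)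

/-- The linear functional `(m, w) ↦ ⟪g, w⟫ - m / 2 * ‖g‖²`, which supports `sqPerspective` along
the ray spanned by `(1, g)`. It is the joint derivative of the Moreau envelope in the parameter and
the point, `g` being the gradient in the point. -/
def sqPerspectiveSupport (g : H) : ℝ × H →L[ℝ] ℝ :=
  innerSL ℝ g ∘L .snd ℝ ℝ H - (‖g‖ ^ 2 / 2) • .fst ℝ ℝ H

theorem sqPerspectiveSupport_apply (g : H) (q : ℝ × H) :
    sqPerspectiveSupport g q = inner ℝ g q.2 - q.1 / 2 * ‖g‖ ^ 2 := by
  simp only [sqPerspectiveSupport, sub_apply, ContinuousLinearMap.comp_apply,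
    innerSL_apply_apply, smul_apply, ContinuousLinearMap.coe_fst',
    ContinuousLinearMap.coe_snd', smul_eq_mul]
  ring

theorem sqPerspective_sub (m : ℝ) (w d : H) :
    sqPerspective (m, w - d) =
      sqPerspective (m, w) - inner ℝ (m⁻¹ • w) d + sqPerspective (m, d) := by
  simp only [sqPerspective, norm_sub_sq_real, real_inner_smul_left]
  ring

theorem sqPerspective_smul (m c : ℝ) (w : H) :
    sqPerspective (m, c • w) = c ^ 2 * sqPerspective (m, w) := by
  simp only [sqPerspective, norm_smul, mul_pow, Real.norm_eq_abs, sq_abs, mul_div_assoc]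

theorem sqPerspective_sub_smul {m : ℝ} (hm : m ≠ 0) (w g : H) :
    sqPerspective (m, w - m • g) = sqPerspective (m, w) - sqPerspectiveSupport g (m, w) := by
  rw [sqPerspective_sub, sqPerspective_smul, real_inner_smul_left, real_inner_smul_right,
    inv_mul_cancel_left₀ hm, sqPerspectiveSupport_apply, real_inner_comm]
  simp only [sqPerspective]
  field_simp
  ring

theorem sqPerspectiveSupport_le {q : ℝ × H} (hq : 0 < q.1) (g : H) :
    sqPerspectiveSupport g q ≤ sqPerspective q := by
  rw [← sub_nonneg, ← sqPerspective_sub_smul hq.ne']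
  exact div_nonneg (sq_nonneg _) (mul_nonneg zero_le_two hq.le)

theorem sqPerspectiveSupport_smul_self {m : ℝ} (hm : m ≠ 0) (g : H) :
    sqPerspectiveSupport g (m, m • g) = sqPerspective (m, m • g) := by
  rw [eq_comm, ← sub_eq_zero, ← sqPerspective_sub_smul hm]
  simp [sqPerspective]

theorem differentiableAt_sqPerspective {q : ℝ × H} (hq : q.1 ≠ 0) :
    DifferentiableAt ℝ sqPerspective q := by
  have hnum : DifferentiableAt ℝ (fun q : ℝ × H => ‖q.2‖ ^ 2) q := differentiableAt_snd.norm_sq ℝ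
  have hden : DifferentiableAt ℝ (fun q : ℝ × H => 2 * q.1) q := differentiableAt_fst.const_mul 2
  exact hnum.fun_mul (hden.fun_inv (mul_ne_zero two_ne_zero hq))

end Perspective

section Subgradient

/-- `g` is a subgradient of `f` at `p`: the affine function with slope `g` through `(p, f p)` lies
below `f`. The inequality is taken in `EReal`, so it is vacuous where `f p = ⊥`. -/
def IsSubgradientAt (f : H → EReal) (g p : H) : Prop :=
  ∀ y, f p + (inner ℝ g (y - p) : ℝ) ≤ f y

variable {f : H → EReal} {g p : H} {a m : ℝ}

theorem moreau_mem_Icc_of_le {z : H} {b c : ℝ}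
    (hb : ∀ y, (b : EReal) ≤ f y + sqPerspective (m, z - y))
    (hc : f p + sqPerspective (m, z - p) ≤ c) : moreau f m z ∈ Icc b c := by
  have hlower : (b : EReal) ≤ ⨅ y, f y + (sqPerspective (m, z - y) : EReal) := le_iInf hb
  have hupper : ⨅ y, f y + (sqPerspective (m, z - y) : EReal) ≤ c := (iInf_le _ p).trans hc
  have hne_top := ne_top_of_le_ne_top (EReal.coe_ne_top c) hupper
  have hne_bot := ne_bot_of_le_ne_bot (EReal.coe_ne_bot b) hlower
  exact ⟨EReal.toReal_le_toReal hlower (EReal.coe_ne_bot b) hne_top,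
    EReal.toReal_le_toReal hupper hne_bot (EReal.coe_ne_top c)⟩

theorem IsSubgradientAt.moreau_mem_Icc (hg : IsSubgradientAt f g p) (ha : f p = a) (hm : 0 < m)
    (z : H) :
    moreau f m z ∈ Icc (a + sqPerspectiveSupport g (m, z - p)) (a + sqPerspective (m, z - p)) := by
  refine moreau_mem_Icc_of_le (p := p) (fun y => ?_) (by rw [ha, EReal.coe_add])
  have hsupport : sqPerspectiveSupport g (m, z - p) ≤
      inner ℝ g (y - p) + sqPerspective (m, z - y) := by
    have hle := sqPerspectiveSupport_le (q := (m, z - y)) hm g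
    have hsplit : inner ℝ g (z - p) = inner ℝ g (z - y) + inner ℝ g (y - p) := by
      rw [← inner_add_right, sub_add_sub_cancel]
    rw [sqPerspectiveSupport_apply] at hle ⊢
    dsimp only at hle ⊢
    linarith
  calc ((a + sqPerspectiveSupport g (m, z - p) : ℝ) : EReal)
      ≤ (a + (inner ℝ g (y - p) + sqPerspective (m, z - y)) : ℝ) := by gcongr
    _ = f p + (inner ℝ g (y - p) : ℝ) + sqPerspective (m, z - y) := by
        rw [ha]
        norm_cast
        ring
    _ ≤ f y + sqPerspective (m, z - y) := by
        gcongr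
        exact hg y

theorem IsSubgradientAt.hasFDerivAt_moreau (hg : IsSubgradientAt f g p) (ha : f p = a)
    (hm : 0 < m) :
    HasFDerivAt (fun q : ℝ × H => moreau f q.1 q.2) (sqPerspectiveSupport g) (m, p + m • g) := by
  have hpos : ∀ᶠ q : ℝ × H in 𝓝 (m, p + m • g), 0 < q.1 :=
    continuousAt_fst.eventually (lt_mem_nhds hm)
  have hshift : HasFDerivAt (fun q : ℝ × H => (q.1, q.2 - p)) (.id ℝ (ℝ × H)) (m, p + m • g) :=
    (hasFDerivAt_fst.prodMk (hasFDerivAt_snd.sub_const p)).congr_fderiv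
      ContinuousLinearMap.fst_prod_snd
  have hlower := ((sqPerspectiveSupport g).hasFDerivAt.comp _ hshift).const_add a
  have hupper := ((differentiableAt_sqPerspective hm.ne').comp (m, p + m • g)
    hshift.differentiableAt).const_add a
  refine hasFDerivAt_of_le_of_le hlower hupper
    (hpos.mono fun q hq => (hg.moreau_mem_Icc ha hq q.2).1)
    (hpos.mono fun q hq => (hg.moreau_mem_Icc ha hq q.2).2) ?_
  simp only [Function.comp_apply, add_sub_cancel_left, sqPerspectiveSupport_smul_self hm.ne']

end Subgradient

section Prox

variable {f : H → EReal} {p x : H} {l : ℝ}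

theorem IsProxPt.ne_top (hp : IsProxPt f l x p) (hproper : ∃ y, f y ≠ ⊤) : f p ≠ ⊤ := by
  obtain ⟨y, hy⟩ := hproper
  intro htop
  have hle := hp y
  rw [htop, EReal.top_add_coe, top_le_iff] at hle
  exact EReal.add_ne_top hy (EReal.coe_ne_top _) hle

theorem IsProxPt.ne_bot (hp : IsProxPt f l x p) (hbot : f p ≠ ⊥) (y : H) : f y ≠ ⊥ := by
  intro hy
  have hle := hp y
  rw [hy, EReal.bot_add, le_bot_iff, EReal.add_eq_bot_iff] at hle
  exact hle.elim hbot (EReal.coe_ne_bot _)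

theorem IsProxPt.add_inner_le (hp : IsProxPt f l x p) (hconv : EConvexOn f) {y : H} {a b : ℝ}
    (ha : f p = a) (hb : f y = b) : a + inner ℝ (l⁻¹ • (x - p)) (y - p) ≤ b := by
  refine le_of_forall_mem_Ioo_le_add_mul (d := sqPerspective (l, y - p)) fun θ ⟨hθ, hθ'⟩ => ?_
  have hsegment : a + sqPerspective (l, x - p) ≤
      (1 - θ) * a + θ * b + sqPerspective (l, x - ((1 - θ) • p + θ • y)) := by
    have hle := (hp _).trans
      (add_le_add_left (hconv p y (1 - θ) θ (by linarith) hθ.le (by ring)) _)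
    rw [ha, hb] at hle
    exact_mod_cast hle
  have hdisplacement : x - ((1 - θ) • p + θ • y) = (x - p) - θ • (y - p) := by module
  rw [hdisplacement, sqPerspective_sub l (x - p), sqPerspective_smul,
    real_inner_smul_right] at hsegment
  refine le_of_mul_le_mul_left ?_ hθ
  linarith

theorem IsProxPt.isSubgradientAt (hp : IsProxPt f l x p) (hconv : EConvexOn f) :
    IsSubgradientAt f (l⁻¹ • (x - p)) p := by
  intro y
  rcases eq_or_ne (f y) ⊤ with hy | hy
  · exact hy ▸ le_top
  rcases eq_or_ne (f p) ⊥ with hbot | hbot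
  · simp [hbot]
  have ha := EReal.coe_toReal (hp.ne_top ⟨y, hy⟩) hbot
  have hb := EReal.coe_toReal hy (hp.ne_bot hbot y)
  rw [← ha, ← hb]
  exact_mod_cast hp.add_inner_le hconv ha.symm hb.symm

theorem IsProxPt.hasFDerivAt_moreau (hp : IsProxPt f l x p) (hconv : EConvexOn f) {a : ℝ}
    (ha : f p = a) (hl : 0 < l) :
    HasFDerivAt (fun q : ℝ × H => moreau f q.1 q.2) (sqPerspectiveSupport (l⁻¹ • (x - p)))
      (l, x) := by
  have hx : p + l • (l⁻¹ • (x - p)) = x := by rw [smul_inv_smul₀ hl.ne', add_sub_cancel]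
  simpa only [hx] using (hp.isSubgradientAt hconv).hasFDerivAt_moreau ha hl

end Prox

theorem moreau_envelope_chain_rule_general
    {Φ : H → EReal} (hΦbot : ∀ y, Φ y ≠ ⊥) (hΦproper : ∃ y, Φ y ≠ ⊤) (hΦconv : EConvexOn Φ)
    {S : Set ℝ} {t lam' : ℝ} {lam : ℝ → ℝ} {x : ℝ → H} {v p : H} (hlampos : 0 < lam t)
    (hlam' : HasDerivWithinAt lam lam' S t) (hx : HasDerivWithinAt x v S t)
    (hp : IsProxPt Φ (lam t) (x t) p) :
    HasDerivWithinAt (fun s => moreau Φ (lam s) (x s))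
      (inner ℝ ((lam t)⁻¹ • (x t - p)) v - lam' / 2 * ‖(lam t)⁻¹ • (x t - p)‖ ^ 2) S t := by
  have hfinite := EReal.coe_toReal (hp.ne_top hΦproper) (hΦbot p)
  have hmoreau := hp.hasFDerivAt_moreau hΦconv hfinite.symm hlampos
  exact (hmoreau.comp_hasDerivWithinAt t (hlam'.prodMk hx)).congr_deriv
    (sqPerspectiveSupport_apply _ _)

end MoreauEnvelope

theorem moreau_envelope_chain_rule
    {H : Type*} [NormedAddCommGroup H] [InnerProductSpace ℝ H] [CompleteSpace H]
    (Φ : H → EReal)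
    (hΦbot : ∀ y, Φ y ≠ ⊥) (hΦproper : ∃ y, Φ y ≠ ⊤)
    (hΦconv : EConvexOn Φ) (hΦlsc : LowerSemicontinuous Φ)
    (hargmin : ∃ z, ∀ y, Φ z ≤ Φ y)
    (t₀ : ℝ) (ht₀ : 0 < t₀)
    (lam lam' : ℝ → ℝ)
    (hlampos : ∀ t ≥ t₀, 0 < lam t)
    (hlam' : ∀ t ≥ t₀, HasDerivAt lam (lam' t) t)
    (x v p : ℝ → H)
    (hx : ∀ t ≥ t₀, HasDerivAt x (v t) t)
    (hp : ∀ t ≥ t₀, IsProxPt Φ (lam t) (x t) (p t))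
    :
    ∀ t ≥ t₀, HasDerivAt (fun s => moreau Φ (lam s) (x s))
      ((inner ℝ ((lam t)⁻¹ • (x t - p t)) (v t) : ℝ)
        - lam' t / 2 * ‖(lam t)⁻¹ • (x t - p t)‖ ^ 2) t := by
  intro t ht
  exact (moreau_envelope_chain_rule_general hΦbot hΦproper hΦconv (hlampos t ht)
    (hlam' t ht).hasDerivWithinAt (hx t ht).hasDerivWithinAt (hp t ht)).hasDerivAt univ_mem
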